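/- Let H_X (size l_X×n) and H_Z (size l_Z×n) be matrices over ℤ₂ with H_X·H_Zᵀ = 0. Suppose every Z-logical operator of the code has Hamming weight at least d_Z (every v with H_X·v = 0 not in the row space of H_Z has weight ≥ d_Z) and every X-logical operator has Hamming weight at least d_X (every u with H_Z·u = 0 not in the row space of H_X has weight ≥ d_X). Then every Z-logical operator of the doubled code — every vector w on Fin 4 × Fin n with G_X·w = 0 that is not in the row space of G_Z — has Hamming weight at least 2·min(d_X, d_Z): the doubled code's distance is twice that of the original code. -/

import Mathlib

/-!
A vector `w = (a, b, c, d)` in the kernel of `G_X` satisfies `H_X (a + c) = 0`, `H_Z (b + c) = 0`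
and `a + b + c + d = 0`. In characteristic two the last equation gives
`w = (a + c, 0, 0, a + c) + (0, b + c, 0, b + c) + (c, c, c, c)`, so `w` is in the row space of
`G_Z` as soon as `a + c` is in that of `H_Z` and `b + c` in that of `H_X`. Hence, when `w` is
logical, one of `a + c`, `b + c` is a logical operator of the original code. Each of its nonzero
coordinates lies over a nonzero column of `w` (the four entries sharing a qubit index), and such a
column has at least two nonzero entries because its entries sum to zero.
-/

open Finset Matrix Submodule

section HammingNorm

variable {κ n M : Type*} [Fintype κ] [DecidableEq M]

theorem two_le_hammingNorm_of_sum_eq_zero [AddCommMonoid M] {f : κ → M} (hf : f ≠ 0)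
    (hsum : ∑ k, f k = 0) : 2 ≤ hammingNorm f := by
  obtain ⟨k, hk⟩ := Function.ne_iff.1 hf
  obtain ⟨k', hk', hne⟩ : ∃ k', f k' ≠ 0 ∧ k' ≠ k := by
    by_contra! h
    have hsingle : ∑ i, f i = f k :=
      Fintype.sum_eq_single k fun i hik => not_not.1 fun hi => hik (h i hi)
    exact hk (hsingle.symm.trans hsum)
  exact one_lt_card.2 ⟨k', by simpa using hk', k, by simpa using hk, hne⟩

theorem hammingNorm_eq_sum_hammingNorm_columns [Fintype n] [Zero M] (w : κ × n → M) :
    hammingNorm w = ∑ j, hammingNorm fun k => w (k, j) := by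
  simp only [hammingNorm, card_filter, Fintype.sum_prod_type_right]

end HammingNorm

section BlockSum

variable {κ n M : Type*} [AddCommMonoid M]

/-- The sum of the blocks of `w` belonging to `s`; for `w = (a, b, c, d)`, the vector `a + c` is
`blockSum {0, 2} w`. -/
def blockSum (s : Finset κ) (w : κ × n → M) : n → M :=
  fun j => ∑ k ∈ s, w (k, j)

theorem blockSum_apply (s : Finset κ) (w : κ × n → M) (j : n) :
    blockSum s w j = ∑ k ∈ s, w (k, j) := rfl

theorem two_mul_hammingNorm_blockSum_le [Fintype κ] [Fintype n] [DecidableEq M]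
    {w : κ × n → M} (hw : blockSum univ w = 0) (s : Finset κ) :
    2 * hammingNorm (blockSum s w) ≤ hammingNorm w := by
  rw [hammingNorm_eq_sum_hammingNorm_columns, hammingNorm, card_filter, mul_sum]
  refine sum_le_sum fun j _ => ?_
  split_ifs with hj
  · obtain ⟨k, -, hk⟩ := exists_ne_zero_of_sum_ne_zero hj
    exact two_le_hammingNorm_of_sum_eq_zero (Function.ne_iff.2 ⟨k, hk⟩) (congrFun hw j)
  · exact Nat.zero_le _

end BlockSum

section BlockCopy

variable {κ n R : Type*} [DecidableEq κ]

/-- The embedding that puts a copy of a vector in each block belonging to `s` and zeros in the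
other blocks; `(v, 0, v, 0)` is `blockCopy {0, 2} v`. -/
def blockCopy [Semiring R] (s : Finset κ) : (n → R) →ₗ[R] (κ × n → R) :=
  LinearMap.pi fun q => if q.1 ∈ s then LinearMap.proj q.2 else 0

theorem blockCopy_apply [Semiring R] (s : Finset κ) (v : n → R) (q : κ × n) :
    blockCopy s v q = if q.1 ∈ s then v q.2 else 0 := by
  rw [blockCopy, LinearMap.pi_apply]
  split_ifs <;> rfl

theorem blockCopy_dotProduct [Semiring R] [Fintype κ] [Fintype n] (s : Finset κ)
    (v : n → R) (w : κ × n → R) : blockCopy s v ⬝ᵥ w = v ⬝ᵥ blockSum s w := by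
  simp only [dotProduct, blockCopy_apply, blockSum_apply, Fintype.sum_prod_type_right, ite_mul,
    zero_mul, sum_ite_mem, univ_inter, mul_sum]

theorem eq_blockCopy_add_blockCopy_add_blockCopy [Ring R] [CharP R 2] {w : Fin 4 × n → R}
    (hw : blockSum univ w = 0) :
    w = blockCopy {0, 3} (blockSum {0, 2} w) +
      (blockCopy {1, 3} (blockSum {1, 2} w) + blockCopy univ (blockSum {2} w)) := by
  ext ⟨k, j⟩
  have hcol : w (0, j) + w (1, j) + w (2, j) + w (3, j) = 0 := by
    rw [← Fin.sum_univ_four fun k => w (k, j)]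
    exact congrFun hw j
  have hlast : w (3, j) = w (0, j) + w (1, j) + w (2, j) :=
    (CharTwo.add_eq_zero.1 hcol).symm
  have htwice : w (2, j) + w (2, j) = 0 := CharTwo.add_self_eq_zero _
  fin_cases k
  · simp [blockCopy_apply, blockSum_apply, add_assoc, htwice]
  · simp [blockCopy_apply, blockSum_apply, add_assoc, htwice]
  · simp [blockCopy_apply, blockSum_apply]
  · simp [blockCopy_apply, blockSum_apply, add_assoc, htwice, hlast, add_comm (w (2, j))]

end BlockCopy

/-- A logical operator of the code with check matrices `A` and `B`: a vector in the kernel of `A`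
outside the row space of `B`. The Z-logical operators of the CSS code `(H_X, H_Z)` are those of
`H_X` and `H_Z`, in this order, and its X-logical operators those of `H_Z` and `H_X`. -/
structure IsLogicalOperator {l m n R : Type*} [Semiring R] [Fintype n] (A : Matrix l n R)
    (B : Matrix m n R) (v : n → R) : Prop where
  mulVec_eq_zero : A *ᵥ v = 0
  notMem_span : v ∉ span R (Set.range B)

section DoubledCheck

variable {l m n R : Type*} [DecidableEq n]

/-- The common shape of the check matrices of the doubled code: the rows of `A` copied to blocks
`0` and `k`, the rows of `B` copied to blocks `1` and `k`, and the standard basis vectors copied to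
all blocks. In the paper's notation `G_X` is `doubledCheck H_X H_Z 2` and `G_Z` is
`doubledCheck H_Z H_X 3`. -/
def doubledCheck [Semiring R] (A : Matrix l n R) (B : Matrix m n R) (k : Fin 4) :
    Matrix (l ⊕ m ⊕ n) (Fin 4 × n) R :=
  of <| Sum.elim (fun i => blockCopy {0, k} (A i)) <|
    Sum.elim (fun i => blockCopy {1, k} (B i)) fun j => blockCopy univ (Pi.single j 1)

theorem eq_doubledCheck [Semiring R] {A : Matrix l n R} {B : Matrix m n R} {k : Fin 4}
    {G : Matrix (l ⊕ m ⊕ n) (Fin 4 × n) R}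
    (hA : ∀ i q, G (Sum.inl i) q = if q.1 = 0 ∨ q.1 = k then A i q.2 else 0)
    (hB : ∀ i q, G (Sum.inr (Sum.inl i)) q = if q.1 = 1 ∨ q.1 = k then B i q.2 else 0)
    (hcol : ∀ j q, G (Sum.inr (Sum.inr j)) q = if q.2 = j then 1 else 0) :
    G = doubledCheck A B k := by
  ext (i | i | j) q
  · simp [hA, doubledCheck, blockCopy_apply]
  · simp [hB, doubledCheck, blockCopy_apply]
  · simp [hcol, doubledCheck, blockCopy_apply, Pi.single_apply]

theorem span_range_doubledCheck [Finite n] [Semiring R] (A : Matrix l n R) (B : Matrix m n R)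
    (k : Fin 4) :
    span R (Set.range (doubledCheck A B k)) =
      (span R (Set.range A)).map (blockCopy {0, k}) ⊔
        ((span R (Set.range B)).map (blockCopy {1, k}) ⊔ LinearMap.range (blockCopy univ)) := by
  have hrange : Set.range (doubledCheck A B k) = blockCopy {0, k} '' Set.range A ∪
      (blockCopy {1, k} '' Set.range B ∪ blockCopy univ '' Set.range (Pi.basisFun R n)) := by
    have hbasis : ⇑(Pi.basisFun R n) = fun j => Pi.single j 1 := funext (Pi.basisFun_apply R n)
    rw [hbasis, ← Set.range_comp (blockCopy {0, k}) A, ← Set.range_comp (blockCopy {1, k}) B,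
      ← Set.range_comp (blockCopy univ), ← Set.Sum.elim_range, ← Set.Sum.elim_range]
    rfl
  rw [hrange, span_union, span_union, span_image, span_image, span_image,
    (Pi.basisFun R n).span_eq, ← LinearMap.range_eq_map]

variable [Fintype n]

theorem doubledCheck_mulVec [Semiring R] (A : Matrix l n R) (B : Matrix m n R) (k : Fin 4)
    (w : Fin 4 × n → R) :
    doubledCheck A B k *ᵥ w = Sum.elim (A *ᵥ blockSum {0, k} w)
      (Sum.elim (B *ᵥ blockSum {1, k} w) (blockSum univ w)) := by
  ext (i | i | j)
  · exact blockCopy_dotProduct _ _ _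
  · exact blockCopy_dotProduct _ _ _
  · exact (blockCopy_dotProduct _ _ _).trans (single_one_dotProduct _ _)

theorem doubledCheck_mulVec_eq_zero_iff [Semiring R] {A : Matrix l n R} {B : Matrix m n R}
    {k : Fin 4} {w : Fin 4 × n → R} :
    doubledCheck A B k *ᵥ w = 0 ↔
      A *ᵥ blockSum {0, k} w = 0 ∧ B *ᵥ blockSum {1, k} w = 0 ∧ blockSum univ w = 0 := by
  simp only [doubledCheck_mulVec, funext_iff, Sum.forall, Sum.elim_inl, Sum.elim_inr,
    Pi.zero_apply]

theorem IsLogicalOperator.blockSum_of_doubledCheck [Ring R] [CharP R 2] {HX : Matrix l n R}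
    {HZ : Matrix m n R} {w : Fin 4 × n → R}
    (h : IsLogicalOperator (doubledCheck HX HZ 2) (doubledCheck HZ HX 3) w) :
    IsLogicalOperator HX HZ (blockSum {0, 2} w) ∨
      IsLogicalOperator HZ HX (blockSum {1, 2} w) := by
  obtain ⟨hX, hZ, hcol⟩ := doubledCheck_mulVec_eq_zero_iff.1 h.mulVec_eq_zero
  by_contra! hcon
  have hspanZ : blockSum {0, 2} w ∈ span R (Set.range HZ) :=
    not_not.1 fun hmem => hcon.1 ⟨hX, hmem⟩
  have hspanX : blockSum {1, 2} w ∈ span R (Set.range HX) :=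
    not_not.1 fun hmem => hcon.2 ⟨hZ, hmem⟩
  apply h.notMem_span
  rw [span_range_doubledCheck, eq_blockCopy_add_blockCopy_add_blockCopy hcol]
  exact add_mem_sup (mem_map_of_mem hspanZ) <|
    add_mem_sup (mem_map_of_mem hspanX) (LinearMap.mem_range_self _ _)

theorem doubled_code_distance_general [Ring R] [CharP R 2] [DecidableEq R]
    {HX : Matrix l n R} {HZ : Matrix m n R} {dX dZ : ℕ}
    (hdZ : ∀ v, IsLogicalOperator HX HZ v → dZ ≤ hammingNorm v)
    (hdX : ∀ u, IsLogicalOperator HZ HX u → dX ≤ hammingNorm u)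
    {w : Fin 4 × n → R}
    (hw : IsLogicalOperator (doubledCheck HX HZ 2) (doubledCheck HZ HX 3) w) :
    2 * min dX dZ ≤ hammingNorm w := by
  obtain ⟨-, -, hcol⟩ := doubledCheck_mulVec_eq_zero_iff.1 hw.mulVec_eq_zero
  obtain hZ | hX := hw.blockSum_of_doubledCheck
  · calc 2 * min dX dZ ≤ 2 * hammingNorm (blockSum {0, 2} w) := by
          gcongr; exact (min_le_right _ _).trans (hdZ _ hZ)
      _ ≤ hammingNorm w := two_mul_hammingNorm_blockSum_le hcol _
  · calc 2 * min dX dZ ≤ 2 * hammingNorm (blockSum {1, 2} w) := by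
          gcongr; exact (min_le_left _ _).trans (hdX _ hX)
      _ ≤ hammingNorm w := two_mul_hammingNorm_blockSum_le hcol _

end DoubledCheck

/-- If every Z-logical operator of the CSS code `(H_X, H_Z)`
has weight at least `d_Z` and every X-logical operator has weight at least
`d_X`, then every Z-logical operator of the doubled code has Hamming weight at
least `2·min(d_X, d_Z)`: the doubled code's distance is twice that of the
original code. -/
theorem doubled_code_distance
    {lX lZ n : ℕ} (HX : Matrix (Fin lX) (Fin n) (ZMod 2))
    (HZ : Matrix (Fin lZ) (Fin n) (ZMod 2))
    (hcomm : HX * HZ.transpose = 0)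
    (dX dZ : ℕ)
    (hdZ : ∀ v : Fin n → ZMod 2, HX.mulVec v = 0 →
      v ∉ Submodule.span (ZMod 2) (Set.range HZ) →
      dZ ≤ (Finset.univ.filter fun j : Fin n => v j ≠ 0).card)
    (hdX : ∀ u : Fin n → ZMod 2, HZ.mulVec u = 0 →
      u ∉ Submodule.span (ZMod 2) (Set.range HX) →
      dX ≤ (Finset.univ.filter fun j : Fin n => u j ≠ 0).card)
    (GX : Matrix (Fin lX ⊕ Fin lZ ⊕ Fin n) (Fin 4 × Fin n) (ZMod 2))
    (GZ : Matrix (Fin lZ ⊕ Fin lX ⊕ Fin n) (Fin 4 × Fin n) (ZMod 2))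
    (hGX₁ : ∀ (i : Fin lX) (q : Fin 4 × Fin n),
      GX (Sum.inl i) q = if q.1 = 0 ∨ q.1 = 2 then HX i q.2 else 0)
    (hGX₂ : ∀ (i : Fin lZ) (q : Fin 4 × Fin n),
      GX (Sum.inr (Sum.inl i)) q = if q.1 = 1 ∨ q.1 = 2 then HZ i q.2 else 0)
    (hGX₃ : ∀ (j : Fin n) (q : Fin 4 × Fin n),
      GX (Sum.inr (Sum.inr j)) q = if q.2 = j then 1 else 0)
    (hGZ₁ : ∀ (i : Fin lZ) (q : Fin 4 × Fin n),
      GZ (Sum.inl i) q = if q.1 = 0 ∨ q.1 = 3 then HZ i q.2 else 0)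
    (hGZ₂ : ∀ (i : Fin lX) (q : Fin 4 × Fin n),
      GZ (Sum.inr (Sum.inl i)) q = if q.1 = 1 ∨ q.1 = 3 then HX i q.2 else 0)
    (hGZ₃ : ∀ (j : Fin n) (q : Fin 4 × Fin n),
      GZ (Sum.inr (Sum.inr j)) q = if q.2 = j then 1 else 0)
    (w : Fin 4 × Fin n → ZMod 2)
    (hker : GX.mulVec w = 0)
    (hlog : w ∉ Submodule.span (ZMod 2) (Set.range GZ)) :
    2 * min dX dZ ≤ (Finset.univ.filter fun q : Fin 4 × Fin n => w q ≠ 0).card := by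
  obtain rfl := eq_doubledCheck hGX₁ hGX₂ hGX₃
  obtain rfl := eq_doubledCheck hGZ₁ hGZ₂ hGZ₃
  exact doubled_code_distance_general (fun v hv => hdZ v hv.mulVec_eq_zero hv.notMem_span)
    (fun u hu => hdX u hu.mulVec_eq_zero hu.notMem_span) ⟨hker, hlog⟩
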